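/- Let N ≥ 2, p > 1 and q > p − 1. There exists a constant C = C(N,p,q) > 0 such that for every open set Ω ⊆ ℝ^N, every strong solution u of (E) on Ω with u > 0 on Ω, every a ∈ Ω and every R > 0 with the closed ball \overline{B}_R(a) contained in Ω, one has max{ u(x) : x ∈ \overline{B}_{R/2}(a) } ≤ C · min{ u(x) : x ∈ \overline{B}_{R/2}(a) }. -/

import Mathlib

open Metric Set Filter Topology MeasureTheory

/-- The vector field `x ↦ |∇u(x)|^{p-2} ∇u(x)`. -/
noncomputable def pGradField {N : ℕ} (p : ℝ) (u : EuclideanSpace ℝ (Fin N) → ℝ)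
    (x : EuclideanSpace ℝ (Fin N)) : EuclideanSpace ℝ (Fin N) :=
  ‖gradient u x‖ ^ (p - 2) • gradient u x

/-- A strong solution of `(E) : -Δ_p u + |∇u|^q = 0` on an open set `G ⊆ ℝ^N`. -/
def IsStrongSolution {N : ℕ} (p q : ℝ) (G : Set (EuclideanSpace ℝ (Fin N)))
    (u : EuclideanSpace ℝ (Fin N) → ℝ) : Prop :=
  ContDiffOn ℝ 1 u G ∧
  ContDiffOn ℝ 3 u {x | x ∈ G ∧ gradient u x ≠ 0} ∧
  ∀ x ∈ G, DifferentiableAt ℝ (pGradField p u) x ∧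
    LinearMap.trace ℝ (EuclideanSpace ℝ (Fin N))
      (fderiv ℝ (pGradField p u) x : EuclideanSpace ℝ (Fin N) →ₗ[ℝ] EuclideanSpace ℝ (Fin N))
      = ‖gradient u x‖ ^ q

/-!
Write `w = log u`, `y = log |∇w|²` and `s = q - p + 1 > 0`. Away from the critical points, `(E)`
reads `Δw = |∇w|^(s+1) e^(sw) - (p-1) |∇w|² - (p-2)/2 ⟨∇y, ∇w⟩`. Differentiating this equation along
`∇w`, Bochner's formula gives an identity for the elliptic operator `|∇w|² Δy + (p-2) D²y(∇w, ∇w)`.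
Bounding `tr (D²w)²` from below by `(Δw)² / N`, the absorption term has a favourable sign because
`s > 0`, and the identity forces `|∇w|² ≤ K Q` at every point where `|∇y|²` and `D²y` are bounded
above by `Q`. At a maximum of `(R² - |x - a|²)² |∇w|²` such bounds come from the cutoff, so that
`|∇ log u| ≤ K / R` on the half ball (Bernstein's method), and integrating along segments gives the
Harnack inequality.
-/

open Module
open scoped Gradient RealInnerProductSpace

section Divergence

variable {E : Type*} [NormedAddCommGroup E] [NormedSpace ℝ E] {V W : E → E} {f : E → ℝ} {x : E}

/-- The divergence of a vector field `V`, i.e. the trace of its Fréchet derivative. -/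
noncomputable def divergence (V : E → E) (x : E) : ℝ :=
  LinearMap.trace ℝ E (fderiv ℝ V x : E →ₗ[ℝ] E)

lemma divergence_congr (h : V =ᶠ[𝓝 x] W) : divergence V x = divergence W x := by
  rw [divergence, divergence, h.fderiv_eq]

lemma divergence_const_smul (c : ℝ) (hV : DifferentiableAt ℝ V x) :
    divergence (fun z => c • V z) x = c * divergence V x := by
  simp [divergence, fderiv_fun_const_smul hV]

variable [FiniteDimensional ℝ E]

lemma divergence_smul (hf : DifferentiableAt ℝ f x) (hV : DifferentiableAt ℝ V x) :
    divergence (fun z => f z • V z) x = f x * divergence V x + fderiv ℝ f x (V x) := by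
  rw [divergence, fderiv_fun_smul hf hV]
  simp [divergence, LinearMap.trace_smulRight]

lemma divergence_exp_smul (hf : DifferentiableAt ℝ f x) (hV : DifferentiableAt ℝ V x) :
    divergence (fun z => Real.exp (f z) • V z) x
      = Real.exp (f x) * (divergence V x + fderiv ℝ f x (V x)) := by
  rw [divergence_smul hf.exp hV, fderiv_exp hf, smul_apply, smul_eq_mul,
    mul_add]

lemma hasFDerivAt_divergence {V' : E →L[ℝ] E →L[ℝ] E} (hV : HasFDerivAt (fderiv ℝ V) V' x) :
    HasFDerivAt (divergence V) (LinearMap.toContinuousLinearMap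
      (LinearMap.trace ℝ E ∘ₗ ContinuousLinearMap.coeLM ℝ) ∘L V') x :=
  (LinearMap.toContinuousLinearMap
    (LinearMap.trace ℝ E ∘ₗ ContinuousLinearMap.coeLM ℝ)).hasFDerivAt.comp x hV

lemma divergence_fderiv_apply_self (hV : ContDiffAt ℝ 2 V x) :
    divergence (fun z => fderiv ℝ V z (V z)) x
      = LinearMap.trace ℝ E (fderiv ℝ V x * fderiv ℝ V x : E →L[ℝ] E)
        + fderiv ℝ (divergence V) x (V x) := by
  have hV₂ : DifferentiableAt ℝ (fderiv ℝ V) x :=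
    (hV.fderiv_right (m := 1) (by norm_num)).differentiableAt (by norm_num)
  have hsymm : (fderiv ℝ (fderiv ℝ V) x).flip (V x) = fderiv ℝ (fderiv ℝ V) x (V x) :=
    ContinuousLinearMap.ext fun v => (hV.isSymmSndFDerivAt (by simp)).eq v (V x)
  rw [divergence, fderiv_clm_apply hV₂ (hV.differentiableAt (by norm_num)), hsymm,
    (hasFDerivAt_divergence hV₂.hasFDerivAt).fderiv]
  rw [ContinuousLinearMap.toLinearMap_add, map_add]
  rfl

end Divergence

section Gradient

variable {E : Type*} [NormedAddCommGroup E] [InnerProductSpace ℝ E] [CompleteSpace E]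
  {f : E → ℝ} {x : E}

lemma contDiffAt_gradient {m n : WithTop ℕ∞} (hf : ContDiffAt ℝ n f x) (hmn : m + 1 ≤ n) :
    ContDiffAt ℝ m (∇ f) x :=
  (InnerProductSpace.toDual ℝ E).symm.contDiff.contDiffAt.comp x (hf.fderiv_right hmn)

lemma continuousOn_gradient {s : Set E} (hf : ContDiffOn ℝ 1 f s) (hs : IsOpen s) :
    ContinuousOn (∇ f) s :=
  fun _ hx => (contDiffAt_gradient (m := 0) (hf.contDiffAt (hs.mem_nhds hx))
    (by norm_num)).continuousAt.continuousWithinAt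

lemma gradient_eq_of_forall_inner {v : E} (h : ∀ w, fderiv ℝ f x w = ⟪v, w⟫) : ∇ f x = v :=
  ext_inner_right ℝ fun w => by rw [inner_gradient_left, h]

lemma gradient_exp (hf : DifferentiableAt ℝ f x) :
    ∇ (fun z => Real.exp (f z)) x = Real.exp (f x) • ∇ f x :=
  gradient_eq_of_forall_inner fun w => by
    rw [fderiv_exp hf]
    simp [inner_smul_left]

lemma gradient_log (hf : DifferentiableAt ℝ f x) (h0 : f x ≠ 0) :
    ∇ (fun z => Real.log (f z)) x = (f x)⁻¹ • ∇ f x :=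
  gradient_eq_of_forall_inner fun w => by
    rw [fderiv.log hf h0]
    simp [inner_smul_left]

lemma gradient_eq_smul_gradient_log (hf : DifferentiableAt ℝ f x) (h0 : f x ≠ 0) :
    ∇ f x = f x • ∇ (fun z => Real.log (f z)) x := by
  rw [gradient_log hf h0, smul_inv_smul₀ h0]

lemma inner_fderiv_gradient (hf : ContDiffAt ℝ 2 f x) (v w : E) :
    ⟪fderiv ℝ (∇ f) x v, w⟫ = fderiv ℝ (fderiv ℝ f) x v w := by
  have h : DifferentiableAt ℝ (∇ f) x :=
    (contDiffAt_gradient (m := 1) hf (by norm_num)).differentiableAt (by norm_num)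
  have hf₂ : DifferentiableAt ℝ (fderiv ℝ f) x :=
    (hf.fderiv_right (m := 1) (by norm_num)).differentiableAt (by norm_num)
  calc ⟪fderiv ℝ (∇ f) x v, w⟫ = fderiv ℝ (fun z => ⟪∇ f z, w⟫) x v := by
        rw [fderiv_inner_apply ℝ h (differentiableAt_const w)]
        simp
    _ = fderiv ℝ (fun z => fderiv ℝ f z w) x v := by simp only [inner_gradient_left]
    _ = fderiv ℝ (fderiv ℝ f) x v w := by
        rw [fderiv_clm_apply hf₂ (differentiableAt_const w)]
        simp

lemma isSymmetric_fderiv_gradient (hf : ContDiffAt ℝ 2 f x) :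
    (fderiv ℝ (∇ f) x : E →ₗ[ℝ] E).IsSymmetric := fun v w => by
  simp only [ContinuousLinearMap.coe_coe]
  rw [inner_fderiv_gradient hf, real_inner_comm, inner_fderiv_gradient hf]
  exact (hf.isSymmSndFDerivAt (by simp)).eq v w

lemma gradient_norm_sq_gradient (hf : ContDiffAt ℝ 2 f x) :
    ∇ (fun z => ‖∇ f z‖ ^ 2) x = (2 : ℝ) • fderiv ℝ (∇ f) x (∇ f x) := by
  have h : DifferentiableAt ℝ (∇ f) x :=
    (contDiffAt_gradient (m := 1) hf (by norm_num)).differentiableAt (by norm_num)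
  refine gradient_eq_of_forall_inner fun w => ?_
  rw [h.hasFDerivAt.norm_sq.fderiv, inner_smul_left]
  simpa using (isSymmetric_fderiv_gradient hf (∇ f x) w).symm

lemma divergence_gradient_exp [FiniteDimensional ℝ E] (hf : ContDiffAt ℝ 2 f x) :
    divergence (∇ fun z => Real.exp (f z)) x
      = Real.exp (f x) * (divergence (∇ f) x + ‖∇ f x‖ ^ 2) := by
  have h := hf.differentiableAt (by norm_num)
  have hev : (∇ fun z => Real.exp (f z)) =ᶠ[𝓝 x] fun z => Real.exp (f z) • ∇ f z := by
    filter_upwards [hf.eventually (by simp)] with z hz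
    exact gradient_exp (hz.differentiableAt (by norm_num))
  rw [divergence_congr hev, divergence_exp_smul h
    ((contDiffAt_gradient (m := 1) hf (by norm_num)).differentiableAt (by norm_num)),
    ← inner_gradient_left, real_inner_self_eq_norm_sq]

theorem divergence_gradient_norm_sq_gradient [FiniteDimensional ℝ E] (hf : ContDiffAt ℝ 3 f x) :
    divergence (∇ fun z => ‖∇ f z‖ ^ 2) x
      = 2 * LinearMap.trace ℝ E (fderiv ℝ (∇ f) x * fderiv ℝ (∇ f) x : E →L[ℝ] E)
        + 2 * fderiv ℝ (divergence (∇ f)) x (∇ f x) := by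
  have hg : ContDiffAt ℝ 2 (∇ f) x := contDiffAt_gradient hf (by norm_num)
  have hev : (∇ fun z => ‖∇ f z‖ ^ 2)
      =ᶠ[𝓝 x] fun z => (2 : ℝ) • fderiv ℝ (∇ f) z (∇ f z) := by
    filter_upwards [hf.eventually (by simp)] with z hz
    exact gradient_norm_sq_gradient (hz.of_le (by norm_num))
  have hd : DifferentiableAt ℝ (fun z => fderiv ℝ (∇ f) z (∇ f z)) x :=
    ((hg.fderiv_right (m := 1) (by norm_num)).clm_apply (hg.of_le (by norm_num))).differentiableAt
      (by norm_num)
  rw [divergence_congr hev, divergence_const_smul 2 hd, divergence_fderiv_apply_self hg]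
  ring

end Gradient

section Trace

variable {E : Type*} [NormedAddCommGroup E] [InnerProductSpace ℝ E]

lemma sq_real_inner_le_norm_sq_mul_norm_sq (v w : E) : ⟪v, w⟫ ^ 2 ≤ ‖v‖ ^ 2 * ‖w‖ ^ 2 := by
  rw [← mul_pow, sq_le_sq, abs_mul, abs_norm, abs_norm]
  exact abs_real_inner_le_norm v w

variable [FiniteDimensional ℝ E] {T : E →ₗ[ℝ] E}

lemma sq_trace_le_finrank_mul_trace_mul_self (hT : T.IsSymmetric) :
    LinearMap.trace ℝ E T ^ 2 ≤ finrank ℝ E * LinearMap.trace ℝ E (T * T) := by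
  set b := stdOrthonormalBasis ℝ E
  rw [T.trace_eq_sum_inner b, (T * T).trace_eq_sum_inner b]
  calc (∑ i, ⟪b i, T (b i)⟫) ^ 2
      ≤ finrank ℝ E * ∑ i, ⟪b i, T (b i)⟫ ^ 2 := by
        simpa using sq_sum_le_card_mul_sum_sq (s := Finset.univ) (f := fun i => ⟪b i, T (b i)⟫)
    _ ≤ finrank ℝ E * ∑ i, ⟪b i, (T * T) (b i)⟫ := by
        gcongr with i
        rw [Module.End.mul_apply, ← hT (b i) (T (b i)), real_inner_self_eq_norm_sq]
        simpa using sq_real_inner_le_norm_sq_mul_norm_sq (b i) (T (b i))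

lemma norm_sq_mul_trace_add_le {B κ : ℝ} (hT : ∀ v, ⟪T v, v⟫ ≤ B * ‖v‖ ^ 2) (hκ : -1 ≤ κ)
    (v : E) :
    ‖v‖ ^ 2 * LinearMap.trace ℝ E T + κ * ⟪T v, v⟫ ≤ B * (finrank ℝ E + κ) * ‖v‖ ^ 2 := by
  classical
  rcases eq_or_ne v 0 with rfl | hv
  · simp
  have hv' : ‖v‖ ≠ 0 := norm_ne_zero_iff.mpr hv
  obtain ⟨s, b, hs, hb⟩ := Orthonormal.exists_orthonormalBasis_extension (𝕜 := ℝ)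
    (v := {‖v‖⁻¹ • v}) (by
      refine ⟨fun i => ?_, fun i j hij => absurd (Subsingleton.elim i j) hij⟩
      rw [Set.mem_singleton_iff.mp i.2, norm_smul, norm_inv, norm_norm, inv_mul_cancel₀ hv'])
  set e : s := ⟨‖v‖⁻¹ • v, by simpa using hs⟩
  have hT' : ∀ i, ⟪b i, T (b i)⟫ ≤ B := fun i => by
    simpa [real_inner_comm] using hT (b i)
  have hve : ‖v‖ ^ 2 * ⟪b e, T (b e)⟫ = ⟪T v, v⟫ := by
    rw [hb, map_smul, inner_smul_left, inner_smul_right, real_inner_comm]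
    simp
    field_simp
  have hrest : ∑ i ∈ Finset.univ.erase e, ⟪b i, T (b i)⟫ ≤ (finrank ℝ E - 1) * B := by
    calc _ ≤ ∑ _i ∈ Finset.univ.erase e, B := Finset.sum_le_sum fun i _ => hT' i
      _ = (finrank ℝ E - 1) * B := by
        rw [Finset.sum_const, nsmul_eq_mul, Finset.cast_card_erase_of_mem (Finset.mem_univ e),
          Finset.card_univ, finrank_eq_card_basis b.toBasis]
  rw [T.trace_eq_sum_inner b, ← Finset.add_sum_erase _ _ (Finset.mem_univ e), ← hve]
  have h1 : (1 + κ) * ⟪b e, T (b e)⟫ ≤ (1 + κ) * B :=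
    mul_le_mul_of_nonneg_left (hT' e) (by linarith)
  calc _ = ‖v‖ ^ 2 * ((1 + κ) * ⟪b e, T (b e)⟫ + ∑ i ∈ Finset.univ.erase e, ⟪b i, T (b i)⟫) := by
        ring
    _ ≤ ‖v‖ ^ 2 * ((1 + κ) * B + (finrank ℝ E - 1) * B) := by gcongr
    _ = B * (finrank ℝ E + κ) * ‖v‖ ^ 2 := by ring

end Trace

section LocalMax

lemma deriv_deriv_nonpos_of_isLocalMax {φ : ℝ → ℝ} {t : ℝ} (hφ : IsLocalMax φ t)
    (hc : ContinuousAt φ t) : deriv (deriv φ) t ≤ 0 := by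
  by_contra! hpos
  have hmin := isLocalMin_of_deriv_deriv_pos hpos hφ.deriv_eq_zero hc
  have hconst : φ =ᶠ[𝓝 t] fun _ => φ t := by
    filter_upwards [hφ, hmin] with r h₁ h₂ using le_antisymm h₁ h₂
  simp [hconst.deriv.deriv_eq] at hpos

variable {E : Type*} [NormedAddCommGroup E] [InnerProductSpace ℝ E] [CompleteSpace E]
  {f : E → ℝ} {a x : E} {R : ℝ}

lemma gradient_eq_zero_of_isLocalMax (hf : IsLocalMax f x) : ∇ f x = 0 :=
  gradient_eq_of_forall_inner fun w => by simp [hf.fderiv_eq_zero]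

lemma inner_fderiv_gradient_nonpos_of_isLocalMax (hmax : IsLocalMax f x)
    (hf : ContDiffAt ℝ 2 f x) (v : E) : ⟪fderiv ℝ (∇ f) x v, v⟫ ≤ 0 := by
  set ℓ : ℝ → E := fun t => x + t • v
  have hℓ₀ : ℓ 0 = x := by simp [ℓ]
  have hℓ : ∀ t, HasDerivAt ℓ v t := fun t => by
    simpa only [id, one_smul] using ((hasDerivAt_id t).smul_const v).const_add x
  have hℓx : Tendsto ℓ (𝓝 0) (𝓝 x) := hℓ₀ ▸ (hℓ 0).continuousAt
  have hderiv : deriv (f ∘ ℓ) =ᶠ[𝓝 0] fun t => ⟪∇ f (ℓ t), v⟫ := by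
    filter_upwards [hℓx.eventually (hf.eventually (by simp))] with t ht
    rw [inner_gradient_left]
    exact ((ht.differentiableAt (by norm_num)).hasFDerivAt.comp_hasDerivAt t (hℓ t)).deriv
  have hgrad : HasFDerivAt (∇ f) (fderiv ℝ (∇ f) x) (ℓ 0) := by
    rw [hℓ₀]
    exact ((contDiffAt_gradient (m := 1) hf (by norm_num)).differentiableAt
      (by norm_num)).hasFDerivAt
  have hderiv₂ : deriv (deriv (f ∘ ℓ)) 0 = ⟪fderiv ℝ (∇ f) x v, v⟫ := by
    rw [hderiv.deriv_eq]
    simpa using ((hgrad.comp_hasDerivAt 0 (hℓ 0)).inner ℝ (hasDerivAt_const 0 v)).deriv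
  have hmaxℓ : IsLocalMax (f ∘ ℓ) 0 := by
    simpa [IsLocalMax, IsMaxFilter, hℓ₀] using hℓx.eventually hmax
  rw [← hderiv₂]
  exact deriv_deriv_nonpos_of_isLocalMax hmaxℓ
    (ContinuousAt.comp (hℓ₀ ▸ hf.continuousAt) (hℓ 0).continuousAt)

lemma gradient_log_sq_sub_norm_sq (hx : R ^ 2 - ‖x - a‖ ^ 2 ≠ 0) :
    ∇ (fun z => Real.log (R ^ 2 - ‖z - a‖ ^ 2)) x
      = (-2 * (R ^ 2 - ‖x - a‖ ^ 2)⁻¹) • (x - a) := by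
  have h := (((hasFDerivAt_id x).sub_const a).norm_sq.const_sub (R ^ 2)).log hx
  refine gradient_eq_of_forall_inner fun w => ?_
  simp only [id] at h
  rw [h.fderiv]
  simp [inner_smul_left, inner_sub_left]
  ring

lemma inner_fderiv_gradient_log_sq_sub_norm_sq (hx : R ^ 2 - ‖x - a‖ ^ 2 ≠ 0) (v : E) :
    ⟪fderiv ℝ (∇ fun z => Real.log (R ^ 2 - ‖z - a‖ ^ 2)) x v, v⟫
      = -2 * (R ^ 2 - ‖x - a‖ ^ 2)⁻¹ * ‖v‖ ^ 2
        - 4 * ((R ^ 2 - ‖x - a‖ ^ 2) ^ 2)⁻¹ * ⟪x - a, v⟫ ^ 2 := by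
  have hev : (∇ fun z => Real.log (R ^ 2 - ‖z - a‖ ^ 2)) =ᶠ[𝓝 x]
      fun z => (-2 * (R ^ 2 - ‖z - a‖ ^ 2)⁻¹) • (z - a) := by
    have hc : ContinuousAt (fun z => R ^ 2 - ‖z - a‖ ^ 2) x := by fun_prop
    filter_upwards [hc.eventually_ne hx] with z hz using gradient_log_sq_sub_norm_sq hz
  have hid : HasFDerivAt (fun z => z - a) (.id ℝ E) x := (hasFDerivAt_id x).sub_const a
  have hfield : HasFDerivAt (fun z => (-2 * (R ^ 2 - ‖z - a‖ ^ 2)⁻¹) • (z - a)) _ x :=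
    (((hasDerivAt_inv hx).comp_hasFDerivAt x (hid.norm_sq.const_sub (R ^ 2))).const_mul
      (-2)).smul hid
  rw [hev.fderiv_eq, hfield.fderiv]
  simp [inner_add_left, inner_smul_left, inner_sub_left]
  ring

end LocalMax

section Cutoff

variable {E : Type*} [NormedAddCommGroup E] [InnerProductSpace ℝ E] {f g : E → ℝ} {a x : E}
  {R : ℝ}

lemma contDiffAt_log_sq_sub_norm_sq {n : WithTop ℕ∞} (hx : R ^ 2 - ‖x - a‖ ^ 2 ≠ 0) :
    ContDiffAt ℝ n (fun z => Real.log (R ^ 2 - ‖z - a‖ ^ 2)) x :=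
  (contDiffAt_const.sub ((contDiffAt_id.sub contDiffAt_const).norm_sq ℝ)).log hx

variable [CompleteSpace E]

lemma gradient_add_const_mul (c : ℝ) (hf : DifferentiableAt ℝ f x) (hg : DifferentiableAt ℝ g x) :
    ∇ (fun z => f z + c * g z) x = ∇ f x + c • ∇ g x :=
  gradient_eq_of_forall_inner fun v => by
    rw [fderiv_fun_add hf (hg.const_mul c), fderiv_const_mul hg]
    simp [inner_add_left, inner_smul_left]

lemma fderiv_gradient_add_const_mul (c : ℝ) (hf : ContDiffAt ℝ 2 f x) (hg : ContDiffAt ℝ 2 g x) :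
    fderiv ℝ (∇ fun z => f z + c * g z) x = fderiv ℝ (∇ f) x + c • fderiv ℝ (∇ g) x := by
  have hev : (∇ fun z => f z + c * g z) =ᶠ[𝓝 x] fun z => ∇ f z + c • ∇ g z := by
    filter_upwards [hf.eventually (by simp), hg.eventually (by simp)] with z hfz hgz
    exact gradient_add_const_mul c (hfz.differentiableAt (by norm_num))
      (hgz.differentiableAt (by norm_num))
  have hf₁ := (contDiffAt_gradient (m := 1) hf (by norm_num)).differentiableAt (by norm_num)
  have hg₁ := (contDiffAt_gradient (m := 1) hg (by norm_num)).differentiableAt (by norm_num)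
  rw [hev.fderiv_eq, fderiv_fun_add hf₁ (hg₁.fun_const_smul c), fderiv_fun_const_smul hg₁]

lemma norm_sq_gradient_le_of_isLocalMax_add_log (hf : DifferentiableAt ℝ f x)
    (hx : 0 < R ^ 2 - ‖x - a‖ ^ 2)
    (hmax : IsLocalMax (fun z => f z + 2 * Real.log (R ^ 2 - ‖z - a‖ ^ 2)) x) :
    ‖∇ f x‖ ^ 2 ≤ 16 * R ^ 2 / (R ^ 2 - ‖x - a‖ ^ 2) ^ 2 := by
  have hg := (contDiffAt_log_sq_sub_norm_sq (n := 1) hx.ne').differentiableAt (by norm_num)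
  have hgrad : ∇ f x = (4 / (R ^ 2 - ‖x - a‖ ^ 2)) • (x - a) := by
    have h := gradient_eq_zero_of_isLocalMax hmax
    rw [gradient_add_const_mul 2 hf hg, gradient_log_sq_sub_norm_sq hx.ne'] at h
    rw [eq_neg_of_add_eq_zero_left h, smul_smul, ← neg_smul]
    congr 1
    ring
  rw [hgrad, norm_smul, mul_pow, Real.norm_eq_abs, sq_abs, div_pow, div_mul_eq_mul_div]
  have hxa : ‖x - a‖ ^ 2 ≤ R ^ 2 := by linarith
  gcongr
  norm_num

lemma inner_fderiv_gradient_le_of_isLocalMax_add_log (hf : ContDiffAt ℝ 2 f x)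
    (hx : 0 < R ^ 2 - ‖x - a‖ ^ 2)
    (hmax : IsLocalMax (fun z => f z + 2 * Real.log (R ^ 2 - ‖z - a‖ ^ 2)) x) (v : E) :
    ⟪fderiv ℝ (∇ f) x v, v⟫ ≤ 12 * R ^ 2 / (R ^ 2 - ‖x - a‖ ^ 2) ^ 2 * ‖v‖ ^ 2 := by
  have hg := contDiffAt_log_sq_sub_norm_sq (n := 2) hx.ne'
  have h := inner_fderiv_gradient_nonpos_of_isLocalMax hmax
    (hf.add (contDiffAt_const.mul hg)) v
  rw [fderiv_gradient_add_const_mul 2 hf hg, add_apply,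
    smul_apply, inner_add_left, real_inner_smul_left,
    inner_fderiv_gradient_log_sq_sub_norm_sq hx.ne'] at h
  set ρ := R ^ 2 - ‖x - a‖ ^ 2
  have hxa : ‖x - a‖ ^ 2 ≤ R ^ 2 := by linarith
  have hinner : ⟪x - a, v⟫ ^ 2 ≤ R ^ 2 * ‖v‖ ^ 2 := by
    calc ⟪x - a, v⟫ ^ 2 ≤ ‖x - a‖ ^ 2 * ‖v‖ ^ 2 := sq_real_inner_le_norm_sq_mul_norm_sq _ _
      _ ≤ R ^ 2 * ‖v‖ ^ 2 := by gcongr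
  calc ⟪fderiv ℝ (∇ f) x v, v⟫ ≤ 4 * ρ⁻¹ * ‖v‖ ^ 2 + 8 * (ρ ^ 2)⁻¹ * ⟪x - a, v⟫ ^ 2 := by linarith
    _ = (4 * ρ * ‖v‖ ^ 2 + 8 * ⟪x - a, v⟫ ^ 2) / ρ ^ 2 := by field_simp
    _ ≤ (4 * R ^ 2 * ‖v‖ ^ 2 + 8 * (R ^ 2 * ‖v‖ ^ 2)) / ρ ^ 2 := by
      gcongr
      linarith [sq_nonneg ‖x - a‖]
    _ = 12 * R ^ 2 / ρ ^ 2 * ‖v‖ ^ 2 := by ring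

end Cutoff

lemma exists_pos_sub_mul_sq_le {κ m s : ℝ} (hκ : 0 < κ) (hm : 0 < m) (hs : 0 < s) (b r : ℝ) :
    ∃ c C : ℝ, 0 < c ∧ 0 < C ∧ ∀ α δ : ℝ, 0 ≤ α →
      c - C * δ ^ 2 ≤ κ * (α - m - b * δ) ^ 2 + 2 * s * α + (r * α - 2 * m) * δ := by
  set k := min (κ / 2) (s / m)
  have hk : 0 < k := lt_min (by positivity) (by positivity)
  have hkκ : 2 * k ≤ κ := by linarith [min_le_left (κ / 2) (s / m)]
  have hks : k * m ≤ s := (le_div_iff₀ hm).mp (min_le_right _ _)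
  refine ⟨k * m ^ 2 / 2, κ * b ^ 2 + r ^ 2 / (4 * k) + 2 / k, by positivity, by positivity,
    fun α δ hα => ?_⟩
  have hsq : k * (α - m) ^ 2 - κ * b ^ 2 * δ ^ 2 ≤ κ * (α - m - b * δ) ^ 2 := by
    nlinarith [mul_nonneg hκ.le (sq_nonneg (α - m - 2 * (b * δ))),
      mul_le_mul_of_nonneg_right hkκ (sq_nonneg (α - m))]
  have hlin : k * m * α ≤ s * α := by gcongr
  have hcross : -(k * α ^ 2 + r ^ 2 / (4 * k) * δ ^ 2) ≤ r * α * δ := by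
    have : k * α ^ 2 + r ^ 2 / (4 * k) * δ ^ 2 + r * α * δ = k * (α + r * δ / (2 * k)) ^ 2 := by
      field_simp
      ring
    linarith [mul_nonneg hk.le (sq_nonneg (α + r * δ / (2 * k)))]
  have hdrift : 2 * m * δ ≤ k * m ^ 2 / 2 + 2 / k * δ ^ 2 := by
    have : k * m ^ 2 / 2 + 2 / k * δ ^ 2 - 2 * m * δ = k / 2 * (m - 2 * δ / k) ^ 2 := by
      field_simp
      ring
    linarith [mul_nonneg (half_pos hk).le (sq_nonneg (m - 2 * δ / k))]
  linarith

section LogEquation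

variable {E : Type*} [NormedAddCommGroup E] [InnerProductSpace ℝ E]

section LogGradSq

variable [CompleteSpace E] {w : E → ℝ} {x : E}

/-- The function `log |∇w|²`, with the junk value `0` at the critical points of `w`. -/
noncomputable def logGradSq (w : E → ℝ) (x : E) : ℝ :=
  Real.log (‖∇ w x‖ ^ 2)

lemma exp_logGradSq (h : ∇ w x ≠ 0) : Real.exp (logGradSq w x) = ‖∇ w x‖ ^ 2 :=
  Real.exp_log (by positivity)

lemma norm_gradient_eq_exp (h : ∇ w x ≠ 0) : ‖∇ w x‖ = Real.exp (logGradSq w x / 2) := by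
  rw [logGradSq, Real.log_pow, Nat.cast_ofNat, mul_div_cancel_left₀ _ two_ne_zero,
    Real.exp_log (norm_pos_iff.mpr h)]

lemma contDiffAt_logGradSq (hw : ContDiffAt ℝ 3 w x) (h : ∇ w x ≠ 0) :
    ContDiffAt ℝ 2 (logGradSq w) x :=
  ((contDiffAt_gradient hw (by norm_num)).norm_sq ℝ).log (by positivity)

lemma norm_sq_smul_gradient_logGradSq (hw : ContDiffAt ℝ 2 w x) (h : ∇ w x ≠ 0) :
    ‖∇ w x‖ ^ 2 • ∇ (logGradSq w) x = (2 : ℝ) • fderiv ℝ (∇ w) x (∇ w x) := by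
  have hz : ‖∇ w x‖ ^ 2 ≠ 0 := by positivity
  have hd : DifferentiableAt ℝ (fun z => ‖∇ w z‖ ^ 2) x :=
    ((contDiffAt_gradient (m := 1) hw (by norm_num)).norm_sq ℝ).differentiableAt (by norm_num)
  rw [← gradient_norm_sq_gradient hw, ← smul_inv_smul₀ hz (∇ (fun z => ‖∇ w z‖ ^ 2) x),
    ← gradient_log hd hz]
  rfl

lemma fderiv_inner_gradient_logGradSq (hw : ContDiffAt ℝ 3 w x) (h : ∇ w x ≠ 0) :
    fderiv ℝ (fun z => ⟪∇ (logGradSq w) z, ∇ w z⟫) x (∇ w x)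
      = ⟪fderiv ℝ (∇ (logGradSq w)) x (∇ w x), ∇ w x⟫
        + ‖∇ w x‖ ^ 2 * ‖∇ (logGradSq w) x‖ ^ 2 / 2 := by
  have hy := (contDiffAt_gradient (m := 1) (contDiffAt_logGradSq hw h)
    (by norm_num)).differentiableAt (by norm_num)
  have hg := (contDiffAt_gradient (m := 2) hw (by norm_num)).differentiableAt (by norm_num)
  have hH : fderiv ℝ (∇ w) x (∇ w x) = (‖∇ w x‖ ^ 2 / 2) • ∇ (logGradSq w) x := by
    rw [div_eq_inv_mul, mul_smul, norm_sq_smul_gradient_logGradSq (hw.of_le (by norm_num)) h,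
      inv_smul_smul₀ two_ne_zero]
  rw [fderiv_inner_apply ℝ hy hg, hH, real_inner_smul_right, real_inner_self_eq_norm_sq]
  ring

lemma norm_sq_mul_divergence_gradient_logGradSq [FiniteDimensional ℝ E]
    (hw : ContDiffAt ℝ 3 w x) (h : ∇ w x ≠ 0) :
    ‖∇ w x‖ ^ 2 * (divergence (∇ (logGradSq w)) x + ‖∇ (logGradSq w) x‖ ^ 2)
      = 2 * LinearMap.trace ℝ E (fderiv ℝ (∇ w) x * fderiv ℝ (∇ w) x : E →L[ℝ] E)
        + 2 * fderiv ℝ (divergence (∇ w)) x (∇ w x) := by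
  have hev : (fun z => Real.exp (logGradSq w z)) =ᶠ[𝓝 x] fun z => ‖∇ w z‖ ^ 2 := by
    filter_upwards [(contDiffAt_gradient (m := 2) hw (by norm_num)).continuousAt.eventually_ne h]
      with z hz using exp_logGradSq hz
  have hgrad : (∇ fun z => Real.exp (logGradSq w z)) =ᶠ[𝓝 x] ∇ fun z => ‖∇ w z‖ ^ 2 :=
    hev.gradient
  rw [← exp_logGradSq h, ← divergence_gradient_exp (contDiffAt_logGradSq hw h),
    divergence_congr hgrad, divergence_gradient_norm_sq_gradient hw]

lemma norm_gradient_eq_exp_log {u : E → ℝ} (hu : DifferentiableAt ℝ u x)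
    (hpos : 0 < u x) (h : ∇ (fun z => Real.log (u z)) x ≠ 0) :
    ‖∇ u x‖ = Real.exp (Real.log (u x) + logGradSq (fun z => Real.log (u z)) x / 2) := by
  rw [gradient_eq_smul_gradient_log hu hpos.ne', norm_smul, norm_gradient_eq_exp h,
    Real.norm_of_nonneg hpos.le, Real.exp_add, Real.exp_log hpos]

lemma divergence_exp_smul_gradient [FiniteDimensional ℝ E] (α β : ℝ) (hw : ContDiffAt ℝ 3 w x)
    (h : ∇ w x ≠ 0) :
    divergence (fun z => Real.exp (α * w z + β * logGradSq w z) • ∇ w z) x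
      = Real.exp (α * w x + β * logGradSq w x)
        * (divergence (∇ w) x + α * ‖∇ w x‖ ^ 2 + β * ⟪∇ (logGradSq w) x, ∇ w x⟫) := by
  have dw := hw.differentiableAt (by norm_num)
  have dy := (contDiffAt_logGradSq hw h).differentiableAt (by norm_num)
  have dg := (contDiffAt_gradient (m := 2) hw (by norm_num)).differentiableAt (by norm_num)
  have hα : DifferentiableAt ℝ (fun z => α * w z) x := dw.const_mul α
  rw [divergence_exp_smul (hα.fun_add (dy.const_mul β)) dg, fderiv_fun_add hα (dy.const_mul β),
    fderiv_const_mul dw, fderiv_const_mul dy, add_apply, smul_apply, smul_apply,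
    ← inner_gradient_left, ← inner_gradient_left, real_inner_self_eq_norm_sq, smul_eq_mul,
    smul_eq_mul, add_assoc]

end LogGradSq

variable [FiniteDimensional ℝ E]

/-- The equation `Δw = |∇w|^(s+1) e^(sw) - (p-1)|∇w|² - (p-2)/2 ⟨∇log|∇w|², ∇w⟩` for a function
without critical points on `U`. With `s = q - p + 1` it is the equation `(E)` for `u = e^w`,
divided by `u^(p-1) |∇w|^(p-2)`. -/
structure IsLogSolution (p s : ℝ) (U : Set E) (w : E → ℝ) : Prop where
  isOpen : IsOpen U
  contDiffOn : ContDiffOn ℝ 3 w U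
  gradient_ne_zero : ∀ x ∈ U, ∇ w x ≠ 0
  divergence_gradient : ∀ x ∈ U, divergence (∇ w) x
    = Real.exp (s * w x + (s + 1) / 2 * logGradSq w x) - (p - 1) * ‖∇ w x‖ ^ 2
      - (p - 2) / 2 * ⟪∇ (logGradSq w) x, ∇ w x⟫

namespace IsLogSolution

variable {p s : ℝ} {U : Set E} {w : E → ℝ} {x : E}

lemma contDiffAt (hw : IsLogSolution p s U w) (hx : x ∈ U) : ContDiffAt ℝ 3 w x :=
  hw.contDiffOn.contDiffAt (hw.isOpen.mem_nhds hx)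

lemma fderiv_divergence_gradient (hw : IsLogSolution p s U w) (hx : x ∈ U) :
    fderiv ℝ (divergence (∇ w)) x (∇ w x)
      = Real.exp (s * w x + (s + 1) / 2 * logGradSq w x)
          * (s * ‖∇ w x‖ ^ 2 + (s + 1) / 2 * ⟪∇ (logGradSq w) x, ∇ w x⟫)
        - (p - 1) * (‖∇ w x‖ ^ 2 * ⟪∇ (logGradSq w) x, ∇ w x⟫)
        - (p - 2) / 2 * (⟪fderiv ℝ (∇ (logGradSq w)) x (∇ w x), ∇ w x⟫
          + ‖∇ w x‖ ^ 2 * ‖∇ (logGradSq w) x‖ ^ 2 / 2) := by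
  have hw₃ := hw.contDiffAt hx
  have h0 := hw.gradient_ne_zero x hx
  have hy := contDiffAt_logGradSq hw₃ h0
  have hg := contDiffAt_gradient (m := 2) hw₃ (by norm_num)
  have dw := hw₃.differentiableAt (by norm_num)
  have dy := hy.differentiableAt (by norm_num)
  have dg := hg.differentiableAt (by norm_num)
  have dgy := (contDiffAt_gradient (m := 1) hy (by norm_num)).differentiableAt (by norm_num)
  have hev : divergence (∇ w) =ᶠ[𝓝 x] fun z =>
      Real.exp (s * w z + (s + 1) / 2 * logGradSq w z) - (p - 1) * ‖∇ w z‖ ^ 2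
        - (p - 2) / 2 * ⟪∇ (logGradSq w) z, ∇ w z⟫ := by
    filter_upwards [hw.isOpen.mem_nhds hx] with z hz using hw.divergence_gradient z hz
  have hexp := ((dw.hasFDerivAt.const_mul s).add (dy.hasFDerivAt.const_mul ((s + 1) / 2))).exp
  have hsq : fderiv ℝ (fun z => ‖∇ w z‖ ^ 2) x (∇ w x)
      = ‖∇ w x‖ ^ 2 * ⟪∇ (logGradSq w) x, ∇ w x⟫ := by
    rw [← inner_gradient_left, gradient_norm_sq_gradient (hw₃.of_le (by norm_num)),
      ← norm_sq_smul_gradient_logGradSq (hw₃.of_le (by norm_num)) h0, real_inner_smul_left]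
  have hww : fderiv ℝ w x (∇ w x) = ‖∇ w x‖ ^ 2 := by
    rw [← inner_gradient_left, real_inner_self_eq_norm_sq]
  have hyw : fderiv ℝ (logGradSq w) x (∇ w x) = ⟪∇ (logGradSq w) x, ∇ w x⟫ :=
    inner_gradient_left.symm
  have hD : HasFDerivAt _ _ x := (hexp.sub ((dg.norm_sq ℝ).hasFDerivAt.const_mul (p - 1))).sub
    ((dgy.inner ℝ dg).hasFDerivAt.const_mul ((p - 2) / 2))
  rw [hev.fderiv_eq]
  refine (congr_arg (· (∇ w x)) hD.fderiv).trans ?_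
  simp [hsq, hww, hyw, fderiv_inner_gradient_logGradSq hw₃ h0, mul_add, -inner_gradient_left,
    -inner_gradient_right]

theorem bochner_logGradSq (hw : IsLogSolution p s U w) (hx : x ∈ U) :
    ‖∇ w x‖ ^ 2 * divergence (∇ (logGradSq w)) x
        + (p - 2) * ⟪fderiv ℝ (∇ (logGradSq w)) x (∇ w x), ∇ w x⟫
      = 2 * LinearMap.trace ℝ E (fderiv ℝ (∇ w) x * fderiv ℝ (∇ w) x : E →L[ℝ] E)
        - p / 2 * (‖∇ w x‖ ^ 2 * ‖∇ (logGradSq w) x‖ ^ 2)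
        + 2 * s * Real.exp (s * w x + (s + 1) / 2 * logGradSq w x) * ‖∇ w x‖ ^ 2
        + ((s + 1) * Real.exp (s * w x + (s + 1) / 2 * logGradSq w x)
          - 2 * (p - 1) * ‖∇ w x‖ ^ 2) * ⟪∇ (logGradSq w) x, ∇ w x⟫ := by
  have h := norm_sq_mul_divergence_gradient_logGradSq (hw.contDiffAt hx)
    (hw.gradient_ne_zero x hx)
  rw [hw.fderiv_divergence_gradient hx] at h
  linear_combination h

end IsLogSolution

end LogEquation

section GradientEstimate

variable {E : Type*} [NormedAddCommGroup E] [InnerProductSpace ℝ E] [FiniteDimensional ℝ E]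

namespace IsLogSolution

variable [Nontrivial E] {p s : ℝ}

lemma sq_divergence_gradient_add_le {U : Set E} {w : E → ℝ} {x : E} {Q : ℝ} (hp : 1 ≤ p)
    (hw : IsLogSolution p s U w) (hx : x ∈ U) (hgrad : ‖∇ (logGradSq w) x‖ ^ 2 ≤ Q)
    (hHess : ∀ v, ⟪fderiv ℝ (∇ (logGradSq w)) x v, v⟫ ≤ Q * ‖v‖ ^ 2) :
    2 / finrank ℝ E * divergence (∇ w) x ^ 2
        + 2 * s * Real.exp (s * w x + (s + 1) / 2 * logGradSq w x) * ‖∇ w x‖ ^ 2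
        + ((s + 1) * Real.exp (s * w x + (s + 1) / 2 * logGradSq w x)
          - 2 * (p - 1) * ‖∇ w x‖ ^ 2) * ⟪∇ (logGradSq w) x, ∇ w x⟫
      ≤ (finrank ℝ E + 3 / 2 * p - 2) * Q * ‖∇ w x‖ ^ 2 := by
  have htrace : 2 / finrank ℝ E * divergence (∇ w) x ^ 2
      ≤ 2 * LinearMap.trace ℝ E (fderiv ℝ (∇ w) x * fderiv ℝ (∇ w) x : E →L[ℝ] E) := by
    have hn : (0 : ℝ) < finrank ℝ E := by exact_mod_cast finrank_pos
    rw [div_mul_eq_mul_div, mul_div_assoc]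
    gcongr
    rw [div_le_iff₀' hn]
    exact sq_trace_le_finrank_mul_trace_mul_self
      (isSymmetric_fderiv_gradient ((hw.contDiffAt hx).of_le (by norm_num)))
  have hellip : ‖∇ w x‖ ^ 2 * divergence (∇ (logGradSq w)) x
        + (p - 2) * ⟪fderiv ℝ (∇ (logGradSq w)) x (∇ w x), ∇ w x⟫
      ≤ Q * (finrank ℝ E + (p - 2)) * ‖∇ w x‖ ^ 2 :=
    norm_sq_mul_trace_add_le hHess (by linarith) (∇ w x)
  have hquad : p / 2 * (‖∇ w x‖ ^ 2 * ‖∇ (logGradSq w) x‖ ^ 2)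
      ≤ p / 2 * (‖∇ w x‖ ^ 2 * Q) := by gcongr
  linarith [hw.bochner_logGradSq hx]

theorem exists_norm_sq_gradient_le (hp : 1 < p) (hs : 0 < s) :
    ∃ K : ℝ, 0 < K ∧ ∀ (U : Set E) (w : E → ℝ), IsLogSolution p s U w →
      ∀ x ∈ U, ∀ Q : ℝ, ‖∇ (logGradSq w) x‖ ^ 2 ≤ Q →
        (∀ v, ⟪fderiv ℝ (∇ (logGradSq w)) x v, v⟫ ≤ Q * ‖v‖ ^ 2) → ‖∇ w x‖ ^ 2 ≤ K * Q := by
  have hn : (1 : ℝ) ≤ finrank ℝ E := by exact_mod_cast finrank_pos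
  obtain ⟨c, C, hc, hC, hcoer⟩ := exists_pos_sub_mul_sq_le (κ := 2 / finrank ℝ E) (m := p - 1)
    (by positivity) (by linarith) hs ((p - 2) / 2) (s + 1)
  have hK : 0 < C + finrank ℝ E + 3 / 2 * p - 2 := by linarith
  refine ⟨(C + finrank ℝ E + 3 / 2 * p - 2) / c, by positivity,
    fun U w hw x hx Q hgrad hHess => ?_⟩
  have hle := hw.sq_divergence_gradient_add_le hp.le hx hgrad hHess
  rw [hw.divergence_gradient x hx] at hle
  have hz : 0 < ‖∇ w x‖ ^ 2 := by
    have := norm_pos_iff.mpr (hw.gradient_ne_zero x hx)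
    positivity
  have hD : ⟪∇ (logGradSq w) x, ∇ w x⟫ ^ 2 ≤ Q * ‖∇ w x‖ ^ 2 := by
    calc ⟪∇ (logGradSq w) x, ∇ w x⟫ ^ 2 ≤ ‖∇ (logGradSq w) x‖ ^ 2 * ‖∇ w x‖ ^ 2 :=
          sq_real_inner_le_norm_sq_mul_norm_sq _ _
      _ ≤ Q * ‖∇ w x‖ ^ 2 := by gcongr
  set z := ‖∇ w x‖ ^ 2
  set A := Real.exp (s * w x + (s + 1) / 2 * logGradSq w x)
  set D := ⟪∇ (logGradSq w) x, ∇ w x⟫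
  have hscaled : c * z ^ 2 - C * D ^ 2 ≤ (finrank ℝ E + 3 / 2 * p - 2) * Q * z := by
    calc c * z ^ 2 - C * D ^ 2 = z ^ 2 * (c - C * (D / z) ^ 2) := by field_simp
      _ ≤ z ^ 2 * _ :=
          mul_le_mul_of_nonneg_left (hcoer (A / z) (D / z) (by positivity)) (by positivity)
      _ = _ := by field_simp
      _ ≤ _ := hle
  rw [div_mul_eq_mul_div, le_div_iff₀ hc]
  refine le_of_mul_le_mul_right ?_ hz
  linarith [mul_le_mul_of_nonneg_left hD hC.le]

end IsLogSolution

end GradientEstimate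

section InteriorEstimate

variable {E : Type*} [NormedAddCommGroup E] [InnerProductSpace ℝ E] {a : E} {R : ℝ}

lemma isLocalMax_logGradSq_add_log [CompleteSpace E] {w : E → ℝ} {x : E} (hR : 0 ≤ R)
    (hw : ∀ᶠ z in 𝓝 x, ∇ w z ≠ 0) (hx : 0 < R ^ 2 - ‖x - a‖ ^ 2)
    (hmax : IsMaxOn (fun z => (R ^ 2 - ‖z - a‖ ^ 2) ^ 2 * ‖∇ w z‖ ^ 2) (closedBall a R) x) :
    IsLocalMax (fun z => logGradSq w z + 2 * Real.log (R ^ 2 - ‖z - a‖ ^ 2)) x := by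
  have hlog : ∀ z, ∇ w z ≠ 0 → 0 < R ^ 2 - ‖z - a‖ ^ 2 →
      logGradSq w z + 2 * Real.log (R ^ 2 - ‖z - a‖ ^ 2)
        = Real.log ((R ^ 2 - ‖z - a‖ ^ 2) ^ 2 * ‖∇ w z‖ ^ 2) := fun z hz hρ => by
    rw [Real.log_mul (by positivity) (by positivity), Real.log_pow (n := 2), logGradSq]
    push_cast
    ring
  have hcont : ContinuousAt (fun z => R ^ 2 - ‖z - a‖ ^ 2) x := by fun_prop
  filter_upwards [hw, hcont.eventually_const_lt hx] with z hz hρ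
  rw [hlog z hz hρ, hlog x hw.self_of_nhds hx]
  refine Real.log_le_log (by positivity) (hmax ?_)
  rw [mem_closedBall, dist_eq_norm]
  exact le_of_sq_le_sq (by linarith) hR

variable [FiniteDimensional ℝ E] {p s : ℝ}

namespace IsLogSolution

lemma exists_sq_mul_norm_sq_gradient_le [Nontrivial E] (hp : 1 < p) (hs : 0 < s) :
    ∃ K : ℝ, 0 < K ∧ ∀ (Ω : Set E) (w : E → ℝ), IsOpen Ω → ContDiffOn ℝ 1 w Ω →
      IsLogSolution p s {x ∈ Ω | ∇ w x ≠ 0} w → ∀ (a : E) (R : ℝ), 0 ≤ R → closedBall a R ⊆ Ω →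
      ∀ x ∈ closedBall a R, (R ^ 2 - ‖x - a‖ ^ 2) ^ 2 * ‖∇ w x‖ ^ 2 ≤ K * R ^ 2 := by
  obtain ⟨K, hK, hbound⟩ := exists_norm_sq_gradient_le (E := E) hp hs
  refine ⟨16 * K, by positivity, fun Ω w hΩ hwΩ hw a R hR hball x hx => ?_⟩
  have hgrad := (continuousOn_gradient hwΩ hΩ).mono hball
  have hcont : ContinuousOn (fun z => (R ^ 2 - ‖z - a‖ ^ 2) ^ 2 * ‖∇ w z‖ ^ 2)
      (closedBall a R) := by fun_prop
  obtain ⟨x₀, hx₀, hmax⟩ := (isCompact_closedBall a R).exists_isMaxOn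
    ⟨a, mem_closedBall_self hR⟩ hcont
  refine (hmax hx).trans ?_
  by_cases h0 : (R ^ 2 - ‖x₀ - a‖ ^ 2) ^ 2 * ‖∇ w x₀‖ ^ 2 = 0
  · exact h0.trans_le (by positivity)
  obtain ⟨hρ0, hgrad0⟩ : R ^ 2 - ‖x₀ - a‖ ^ 2 ≠ 0 ∧ ∇ w x₀ ≠ 0 := by simpa using h0
  have hρ : 0 < R ^ 2 - ‖x₀ - a‖ ^ 2 := by
    rw [mem_closedBall, dist_eq_norm] at hx₀
    exact lt_of_le_of_ne (sub_nonneg.mpr (by gcongr)) hρ0.symm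
  have hU : x₀ ∈ {x ∈ Ω | ∇ w x ≠ 0} := ⟨hball hx₀, hgrad0⟩
  have hlocal := isLocalMax_logGradSq_add_log hR
    (eventually_of_mem (hw.isOpen.mem_nhds hU) fun z hz => hz.2) hρ hmax
  have hy := contDiffAt_logGradSq (hw.contDiffAt hU) hgrad0
  have hle := hbound _ w hw x₀ hU _
    (norm_sq_gradient_le_of_isLocalMax_add_log (hy.differentiableAt (by norm_num)) hρ hlocal)
    fun v => (inner_fderiv_gradient_le_of_isLocalMax_add_log hy hρ hlocal v).trans
      (by gcongr; norm_num)
  calc (R ^ 2 - ‖x₀ - a‖ ^ 2) ^ 2 * ‖∇ w x₀‖ ^ 2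
      ≤ (R ^ 2 - ‖x₀ - a‖ ^ 2) ^ 2 * (K * (16 * R ^ 2 / (R ^ 2 - ‖x₀ - a‖ ^ 2) ^ 2)) := by gcongr
    _ = 16 * K * R ^ 2 := by field_simp

theorem exists_norm_gradient_le (hp : 1 < p) (hs : 0 < s) :
    ∃ K : ℝ, 0 < K ∧ ∀ (Ω : Set E) (w : E → ℝ), IsOpen Ω → ContDiffOn ℝ 1 w Ω →
      IsLogSolution p s {x ∈ Ω | ∇ w x ≠ 0} w → ∀ (a : E) (R : ℝ), 0 < R → closedBall a R ⊆ Ω →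
      ∀ x ∈ closedBall a (R / 2), ‖∇ w x‖ ≤ K / R := by
  rcases subsingleton_or_nontrivial E with hE | hE
  · exact ⟨1, one_pos, fun _ _ _ _ _ _ _ hR _ x _ => by
      rw [Subsingleton.elim (∇ _ x) 0, norm_zero]
      positivity⟩
  obtain ⟨K, hK, hbound⟩ := exists_sq_mul_norm_sq_gradient_le (E := E) hp hs
  refine ⟨√(2 * K), by positivity, fun Ω w hΩ hwΩ hw a R hR hball x hx => ?_⟩
  have hle := hbound Ω w hΩ hwΩ hw a R hR.le hball x
    (closedBall_subset_closedBall (by linarith) hx)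
  rw [mem_closedBall, dist_eq_norm] at hx
  have hρ : 3 / 4 * R ^ 2 ≤ R ^ 2 - ‖x - a‖ ^ 2 := by
    linarith [pow_le_pow_left₀ (norm_nonneg _) hx 2]
  have hscaled : (3 / 4 * R ^ 2) ^ 2 * ‖∇ w x‖ ^ 2 ≤ K * R ^ 2 := le_trans (by gcongr) hle
  have hsq : (‖∇ w x‖ * R) ^ 2 ≤ 16 / 9 * K := by
    refine le_of_mul_le_mul_left ?_ (by positivity : 0 < 9 / 16 * R ^ 2)
    linarith
  rw [le_div_iff₀ hR]
  exact Real.le_sqrt_of_sq_le (by linarith)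

end IsLogSolution

end InteriorEstimate

section StrongSolution

variable {N : ℕ} {p q : ℝ} {Ω : Set (EuclideanSpace ℝ (Fin N))}
  {u : EuclideanSpace ℝ (Fin N) → ℝ} {x : EuclideanSpace ℝ (Fin N)}

lemma pGradField_eq_exp_smul (p : ℝ) (hu : DifferentiableAt ℝ u x) (hpos : 0 < u x)
    (h : ∇ (fun z => Real.log (u z)) x ≠ 0) :
    pGradField p u x = Real.exp ((p - 1) * Real.log (u x)
      + (p - 2) / 2 * logGradSq (fun z => Real.log (u z)) x) • ∇ (fun z => Real.log (u z)) x := by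
  rw [pGradField, norm_gradient_eq_exp_log hu hpos h, gradient_eq_smul_gradient_log hu hpos.ne',
    ← Real.exp_mul, smul_smul]
  nth_rw 2 [← Real.exp_log hpos]
  rw [← Real.exp_add]
  congr 2
  ring

lemma IsStrongSolution.isLogSolution_log (hΩ : IsOpen Ω) (hu : IsStrongSolution p q Ω u)
    (hpos : ∀ x ∈ Ω, 0 < u x) :
    IsLogSolution p (q - p + 1) {x ∈ Ω | ∇ (fun z => Real.log (u z)) x ≠ 0}
      (fun z => Real.log (u z)) := by
  obtain ⟨hu₁, hu₃, hdiv⟩ := hu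
  set w := fun z => Real.log (u z)
  set U := {x ∈ Ω | ∇ w x ≠ 0}
  have hd : ∀ z ∈ Ω, DifferentiableAt ℝ u z := fun z hz =>
    (hu₁.contDiffAt (hΩ.mem_nhds hz)).differentiableAt (by norm_num)
  have hU : IsOpen U := (continuousOn_gradient (hu₁.log fun z hz => (hpos z hz).ne')
    hΩ).isOpen_inter_preimage hΩ isOpen_compl_singleton
  have hw : ContDiffOn ℝ 3 w U := by
    refine (hu₃.mono fun z hz => ⟨hz.1, ?_⟩).log fun z hz => (hpos z hz.1).ne'
    rw [gradient_eq_smul_gradient_log (hd z hz.1) (hpos z hz.1).ne']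
    exact smul_ne_zero (hpos z hz.1).ne' hz.2
  refine ⟨hU, hw, fun z hz => hz.2, fun x hx => ?_⟩
  have hfield : pGradField p u =ᶠ[𝓝 x] fun z =>
      Real.exp ((p - 1) * w z + (p - 2) / 2 * logGradSq w z) • ∇ w z := by
    filter_upwards [hU.mem_nhds hx] with z hz
    exact pGradField_eq_exp_smul p (hd z hz.1) (hpos z hz.1) hz.2
  have heq : divergence (pGradField p u) x = ‖∇ u x‖ ^ q := (hdiv x hx.1).2
  have hexp : ‖∇ u x‖ ^ q = Real.exp ((p - 1) * w x + (p - 2) / 2 * logGradSq w x)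
      * Real.exp ((q - p + 1) * w x + (q - p + 1 + 1) / 2 * logGradSq w x) := by
    rw [norm_gradient_eq_exp_log (hd x hx.1) (hpos x hx.1) hx.2, ← Real.exp_mul, ← Real.exp_add]
    congr 1
    ring
  rw [divergence_congr hfield,
    divergence_exp_smul_gradient _ _ (hw.contDiffAt (hU.mem_nhds hx)) hx.2, hexp] at heq
  linarith [mul_left_cancel₀ (Real.exp_pos _).ne' heq]

end StrongSolution

lemma le_exp_mul_of_norm_gradient_log_le {E : Type*} [NormedAddCommGroup E]
    [InnerProductSpace ℝ E] [CompleteSpace E] {u : E → ℝ} {s : Set E} {M : ℝ} {x y : E}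
    (hs : Convex ℝ s) (hu : ∀ z ∈ s, DifferentiableAt ℝ u z) (hpos : ∀ z ∈ s, 0 < u z)
    (hM : ∀ z ∈ s, ‖∇ (fun z => Real.log (u z)) z‖ ≤ M) (hx : x ∈ s) (hy : y ∈ s) :
    u x ≤ Real.exp (M * ‖x - y‖) * u y := by
  have hM' : ∀ z ∈ s, ‖fderiv ℝ (fun z => Real.log (u z)) z‖ ≤ M := fun z hz => by
    rw [← toDual_gradient, LinearIsometryEquiv.norm_map]
    exact hM z hz
  have hlip := hs.norm_image_sub_le_of_norm_fderiv_le
    (fun z hz => (hu z hz).log (hpos z hz).ne') hM' hy hx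
  rw [← Real.log_le_log_iff (hpos x hx) (mul_pos (Real.exp_pos _) (hpos y hy)),
    Real.log_mul (Real.exp_pos _).ne' (hpos y hy).ne', Real.log_exp, ← sub_le_iff_le_add]
  exact (Real.le_norm_self _).trans hlip

theorem harnack_general (N : ℕ) (p q : ℝ) (hp : 1 < p) (hq : p - 1 < q) :
    ∃ C : ℝ, 0 < C ∧
      ∀ Ω : Set (EuclideanSpace ℝ (Fin N)), IsOpen Ω →
        ∀ u : EuclideanSpace ℝ (Fin N) → ℝ, IsStrongSolution p q Ω u →
          (∀ x ∈ Ω, 0 < u x) →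
          ∀ (a : EuclideanSpace ℝ (Fin N)) (R : ℝ), 0 < R → closedBall a R ⊆ Ω →
            ∀ x ∈ closedBall a (R / 2), ∀ y ∈ closedBall a (R / 2), u x ≤ C * u y := by
  obtain ⟨K, hK, hgrad⟩ := IsLogSolution.exists_norm_gradient_le
    (E := EuclideanSpace ℝ (Fin N)) hp (by linarith : 0 < q - p + 1)
  refine ⟨Real.exp K, Real.exp_pos K, fun Ω hΩ u hu hpos a R hR hball x hx y hy => ?_⟩
  have hsub : closedBall a (R / 2) ⊆ Ω :=
    (closedBall_subset_closedBall (by linarith)).trans hball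
  have hle := le_exp_mul_of_norm_gradient_log_le (convex_closedBall a (R / 2))
    (fun z hz => (hu.1.contDiffAt (hΩ.mem_nhds (hsub hz))).differentiableAt (by norm_num))
    (fun z hz => hpos z (hsub hz))
    (hgrad Ω _ hΩ (hu.1.log fun z hz => (hpos z hz).ne') (hu.isLogSolution_log hΩ hpos)
      a R hR hball) hx hy
  have hxy : K / R * ‖x - y‖ ≤ K := by
    rw [div_mul_eq_mul_div, div_le_iff₀ hR, ← dist_eq_norm]
    gcongr
    linarith [dist_triangle_right x y a, mem_closedBall.mp hx, mem_closedBall.mp hy]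
  exact hle.trans (mul_le_mul_of_nonneg_right (Real.exp_le_exp.mpr hxy) (hpos y (hsub hy)).le)

/-- Harnack inequality for positive solutions of (E). -/
theorem harnack (N : ℕ) (hN : 2 ≤ N) (p q : ℝ) (hp : 1 < p) (hq : p - 1 < q) :
    ∃ C : ℝ, 0 < C ∧
      ∀ Ω : Set (EuclideanSpace ℝ (Fin N)), IsOpen Ω →
        ∀ u : EuclideanSpace ℝ (Fin N) → ℝ, IsStrongSolution p q Ω u →
          (∀ x ∈ Ω, 0 < u x) →
          ∀ a ∈ Ω, ∀ R : ℝ, 0 < R → Metric.closedBall a R ⊆ Ω →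
            ∀ x ∈ Metric.closedBall a (R / 2), ∀ y ∈ Metric.closedBall a (R / 2),
              u x ≤ C * u y := by
  obtain ⟨C, hC, hle⟩ := harnack_general N p q hp hq
  exact ⟨C, hC, fun Ω hΩ u hu hpos a _ => hle Ω hΩ u hu hpos a⟩
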